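/- Let γ ∈ (0, 2s). Then there exists a function v ∈ C^∞(ℝⁿ) and a constant C > 0 such that: v(0) = 0; 0 ≤ v(x) ≤ |x|^γ for every x ∈ ℝⁿ; v(x) = |x|^γ whenever |x| ≥ 1; and sup_{x ∈ ℝⁿ} ℐv(x) ≤ C. -/

import Mathlib

open MeasureTheory

/-- The anisotropic integro-differential operator
`ℐv(x) = ∫_{S^{n-1} × ℝ} (v(x + rϑ) + v(x − rϑ) − 2v(x)) dμ(ϑ) dr / |r|^{1+2s}`. -/
noncomputable def opI (n : ℕ) (s : ℝ)
    (μ : Measure (Metric.sphere (0 : EuclideanSpace ℝ (Fin n)) 1))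
    (v : EuclideanSpace ℝ (Fin n) → ℝ) (x : EuclideanSpace ℝ (Fin n)) : ℝ :=
  ∫ p : Metric.sphere (0 : EuclideanSpace ℝ (Fin n)) 1 × ℝ,
    (v (x + p.2 • (p.1 : EuclideanSpace ℝ (Fin n))) +
      v (x - p.2 • (p.1 : EuclideanSpace ℝ (Fin n))) - 2 * v x) / |p.2| ^ (1 + 2 * s)
    ∂(μ.prod volume)

section BarrierConstruction

variable {E : Type*} [NormedAddCommGroup E]

lemma norm_rpow_eq_sq_rpow_half (x : E) (γ : ℝ) : ‖x‖ ^ γ = (‖x‖ ^ 2) ^ (γ / 2) := by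
  rw [← Real.rpow_natCast, ← Real.rpow_mul (norm_nonneg x)]
  congr 1
  push_cast
  ring

/-- The function `|x| ^ γ`, smoothly cut off to zero near the origin. -/
noncomputable def barrier (γ : ℝ) (x : E) : ℝ :=
  Real.smoothTransition (2 * ‖x‖ ^ 2 - 1) * ‖x‖ ^ γ

lemma barrier_zero (γ : ℝ) : barrier γ (0 : E) = 0 := by
  simp [barrier, Real.smoothTransition.zero_of_nonpos]

lemma barrier_nonneg (γ : ℝ) (x : E) : 0 ≤ barrier γ x :=
  mul_nonneg (Real.smoothTransition.nonneg _) (by positivity)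

lemma barrier_le (γ : ℝ) (x : E) : barrier γ x ≤ ‖x‖ ^ γ :=
  mul_le_of_le_one_left (by positivity) (Real.smoothTransition.le_one _)

lemma barrier_eq_of_one_le (γ : ℝ) {x : E} (hx : 1 ≤ ‖x‖) : barrier γ x = ‖x‖ ^ γ := by
  rw [barrier, Real.smoothTransition.one_of_one_le (by nlinarith), one_mul]

lemma norm_rpow_sub_one_le_barrier {γ : ℝ} (hγ : 0 ≤ γ) (x : E) :
    ‖x‖ ^ γ - 1 ≤ barrier γ x := by
  rcases le_total 1 ‖x‖ with hx | hx
  · rw [barrier_eq_of_one_le γ hx]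
    linarith
  · linarith [barrier_nonneg γ x, Real.rpow_le_one (norm_nonneg x) hx hγ]

variable [InnerProductSpace ℝ E]

/-- A Clarkson-type inequality, from concavity of `t ↦ t ^ (γ / 2)` and the parallelogram law. -/
lemma norm_add_rpow_add_norm_sub_rpow_le {γ : ℝ} (h0 : 0 ≤ γ) (h2 : γ ≤ 2) (a b : E) :
    ‖a + b‖ ^ γ + ‖a - b‖ ^ γ ≤ 2 * (‖a‖ ^ 2 + ‖b‖ ^ 2) ^ (γ / 2) := by
  have hc := (Real.concaveOn_rpow (p := γ / 2) (by linarith) (by linarith)).2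
    (Set.mem_Ici.2 (sq_nonneg ‖a + b‖))
    (Set.mem_Ici.2 (sq_nonneg ‖a - b‖))
    (show (0 : ℝ) ≤ 1 / 2 by norm_num) (show (0 : ℝ) ≤ 1 / 2 by norm_num) (by norm_num)
  simp only [smul_eq_mul] at hc
  have hp : 1 / 2 * ‖a + b‖ ^ 2 + 1 / 2 * ‖a - b‖ ^ 2 = ‖a‖ ^ 2 + ‖b‖ ^ 2 := by
    linarith [parallelogram_law_with_norm ℝ a b]
  rw [hp] at hc
  rw [norm_rpow_eq_sq_rpow_half (a + b), norm_rpow_eq_sq_rpow_half (a - b)]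
  linarith

lemma add_rpow_le_rpow_add_mul {p t u : ℝ} (hp0 : 0 ≤ p) (hp1 : p ≤ 1) (ht : 1 ≤ t)
    (hu : 0 ≤ u) : (t + u) ^ p ≤ t ^ p + p * u := by
  have ht0 : 0 < t := by linarith
  have hut : 0 ≤ u / t := by positivity
  have hb : (1 + u / t) ^ p ≤ 1 + p * (u / t) :=
    rpow_one_add_le_one_add_mul_self (by linarith) hp0 hp1
  have hle : t ^ p ≤ t := by
    simpa using Real.rpow_le_rpow_of_exponent_le ht hp1
  calc (t + u) ^ p = (t * (1 + u / t)) ^ p := by congr 1; field_simp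
    _ = t ^ p * (1 + u / t) ^ p := Real.mul_rpow ht0.le (by linarith)
    _ ≤ t ^ p * (1 + p * (u / t)) := by gcongr
    _ = t ^ p + t ^ p * (p * (u / t)) := by ring
    _ ≤ t ^ p + t * (p * (u / t)) := by gcongr
    _ = t ^ p + p * u := by field_simp

lemma contDiff_barrier (γ : ℝ) : ContDiff ℝ (⊤ : ℕ∞) (barrier γ : E → ℝ) := by
  rw [contDiff_iff_contDiffAt]
  intro x
  rcases eq_or_ne x 0 with rfl | hx
  · have hev : (barrier γ : E → ℝ) =ᶠ[nhds 0] fun _ => 0 := by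
      filter_upwards [Metric.ball_mem_nhds (0 : E) (show (0 : ℝ) < 1 / 2 by norm_num)] with y hy
      rw [mem_ball_zero_iff] at hy
      rw [barrier, Real.smoothTransition.zero_of_nonpos (by nlinarith [norm_nonneg y]), zero_mul]
    exact contDiffAt_const.congr_of_eventuallyEq hev
  · have h1 : ContDiffAt ℝ (⊤ : ℕ∞) (fun y : E => 2 * ‖y‖ ^ 2 - 1) x :=
      (contDiffAt_const.mul (contDiff_norm_sq ℝ).contDiffAt).sub contDiffAt_const
    have h2 : ContDiffAt ℝ (⊤ : ℕ∞) (fun y : E => ‖y‖ ^ γ) x :=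
      (Real.contDiffAt_rpow_const_of_ne (norm_ne_zero_iff.2 hx)).comp x (contDiffAt_norm ℝ hx)
    exact (Real.smoothTransition.contDiffAt.comp x h1).mul h2

lemma barrier_second_diff_le_rpow {γ : ℝ} (h0 : 0 ≤ γ) (h2 : γ ≤ 2) (x h : E) :
    barrier γ (x + h) + barrier γ (x - h) - 2 * barrier γ x ≤ 2 * ‖h‖ ^ γ + 2 := by
  have hs := Real.rpow_add_le_add_rpow (sq_nonneg ‖x‖) (sq_nonneg ‖h‖)
    (show 0 ≤ γ / 2 by linarith) (by linarith)
  rw [← norm_rpow_eq_sq_rpow_half, ← norm_rpow_eq_sq_rpow_half] at hs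
  linarith [norm_add_rpow_add_norm_sub_rpow_le h0 h2 x h, barrier_le γ (x + h),
    barrier_le γ (x - h), norm_rpow_sub_one_le_barrier h0 x]

lemma barrier_second_diff_le_sq_of_two_le {γ : ℝ} (h0 : 0 ≤ γ) (h2 : γ ≤ 2) {x h : E}
    (hx : 2 ≤ ‖x‖) :
    barrier γ (x + h) + barrier γ (x - h) - 2 * barrier γ x ≤ γ * ‖h‖ ^ 2 := by
  have hb := add_rpow_le_rpow_add_mul (p := γ / 2) (by linarith) (by linarith)
    (show 1 ≤ ‖x‖ ^ 2 by nlinarith) (sq_nonneg ‖h‖)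
  rw [← norm_rpow_eq_sq_rpow_half] at hb
  rw [barrier_eq_of_one_le γ (show 1 ≤ ‖x‖ by linarith)]
  linarith [norm_add_rpow_add_norm_sub_rpow_le h0 h2 x h, barrier_le γ (x + h),
    barrier_le γ (x - h)]

/-- A `C²` function has quadratically bounded second differences, uniformly on bounded sets. -/
lemma exists_second_diff_le_sq [ProperSpace E] {f : E → ℝ} (hf : ContDiff ℝ 2 f) (R : ℝ) :
    ∃ K : ℝ, 0 ≤ K ∧ ∀ x h : E, ‖x‖ ≤ R → ‖h‖ ≤ 1 →
      f (x + h) + f (x - h) - 2 * f x ≤ K * ‖h‖ ^ 2 := by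
  have hf' : ContDiff ℝ 1 (fderiv ℝ f) := hf.fderiv_right (by norm_num)
  have hd : Differentiable ℝ f := hf.differentiable (by norm_num)
  have hd' : Differentiable ℝ (fderiv ℝ f) := hf'.differentiable (by norm_num)
  obtain ⟨M, hM⟩ := (isCompact_closedBall (0 : E) (R + 1)).exists_bound_of_continuousOn
    (hf'.continuous_fderiv (by norm_num)).continuousOn
  have hlip : ∀ y ∈ Metric.closedBall (0 : E) (R + 1), ∀ z ∈ Metric.closedBall (0 : E) (R + 1),
      ‖fderiv ℝ f z - fderiv ℝ f y‖ ≤ |M| * ‖z - y‖ := fun y hy z hz =>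
    (convex_closedBall _ _).norm_image_sub_le_of_norm_fderiv_le (𝕜 := ℝ)
      (fun w _ => hd' w) (fun w hw => (hM w hw).trans (le_abs_self M)) hy hz
  refine ⟨2 * |M|, by positivity, fun x h hx hh => ?_⟩
  have hg : ∀ k ∈ Metric.closedBall (0 : E) ‖h‖,
      HasFDerivWithinAt (fun k => f (x + k) + f (x - k))
        (fderiv ℝ f (x + k) - fderiv ℝ f (x - k)) (Metric.closedBall (0 : E) ‖h‖) k := by
    intro k _
    have h1 : HasFDerivAt (fun k => f (x + k)) (fderiv ℝ f (x + k)) k := by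
      simpa using! (hd (x + k)).hasFDerivAt.comp k ((hasFDerivAt_id k).const_add x)
    have h2 : HasFDerivAt (fun k => f (x - k)) (-fderiv ℝ f (x - k)) k := by
      simpa using! (hd (x - k)).hasFDerivAt.comp k ((hasFDerivAt_id k).const_sub x)
    simpa [sub_eq_add_neg] using! (h1.add h2).hasFDerivWithinAt
  have hbd : ∀ k ∈ Metric.closedBall (0 : E) ‖h‖,
      ‖fderiv ℝ f (x + k) - fderiv ℝ f (x - k)‖ ≤ 2 * |M| * ‖h‖ := by
    intro k hk
    rw [mem_closedBall_zero_iff] at hk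
    refine (hlip (x - k) ?_ (x + k) ?_).trans ?_
    · rw [mem_closedBall_zero_iff]
      linarith [norm_sub_le x k]
    · rw [mem_closedBall_zero_iff]
      linarith [norm_add_le x k]
    · have : x + k - (x - k) = k + k := by abel
      rw [this]
      nlinarith [norm_add_le k k, abs_nonneg M]
  have hmv := (convex_closedBall (0 : E) ‖h‖).norm_image_sub_le_of_norm_hasFDerivWithin_le
    hg hbd (x := 0) (y := h) (by simp) (by simp)
  simp only [add_zero, sub_zero, Real.norm_eq_abs] at hmv
  nlinarith [le_abs_self (f (x + h) + f (x - h) - (f x + f x))]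

lemma exists_barrier_second_diff_le_sq [ProperSpace E] {γ : ℝ} (h0 : 0 ≤ γ) (h2 : γ ≤ 2) :
    ∃ K : ℝ, 0 ≤ K ∧ ∀ x h : E, ‖h‖ ≤ 1 →
      barrier γ (x + h) + barrier γ (x - h) - 2 * barrier γ x ≤ K * ‖h‖ ^ 2 := by
  obtain ⟨K, hK0, hK⟩ := exists_second_diff_le_sq
    ((contDiff_barrier (E := E) γ).of_le (WithTop.coe_le_coe.2 le_top)) 2
  refine ⟨K + γ, by linarith, fun x h hh => ?_⟩
  rcases le_total ‖x‖ 2 with hx | hx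
  · nlinarith [hK x h hx hh, sq_nonneg ‖h‖]
  · nlinarith [barrier_second_diff_le_sq_of_two_le (h := h) h0 h2 hx, sq_nonneg ‖h‖]

end BarrierConstruction

/-- `K u ^ a` for `u ≤ 1` and `L u ^ b` for `u > 1`. -/
noncomputable def twoPowers (K L a b u : ℝ) : ℝ :=
  if u ≤ 1 then K * u ^ a else L * u ^ b

lemma integrable_twoPowers_abs (K L : ℝ) {a b : ℝ} (ha : -1 < a) (hb : b < -1) :
    Integrable (fun r : ℝ => twoPowers K L a b |r|) := by
  have key : IntegrableOn (twoPowers K L a b) (Set.Ioi 0) := by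
    rw [← Set.Ioc_union_Ioi_eq_Ioi zero_le_one]
    refine IntegrableOn.union ?_ ?_
    · have h : IntegrableOn (fun t : ℝ => K * t ^ a) (Set.Ioc 0 1) :=
        ((intervalIntegrable_iff_integrableOn_Ioc_of_le zero_le_one).1
          (intervalIntegral.intervalIntegrable_rpow' ha)).const_mul K
      refine h.congr_fun (fun t ht => ?_) measurableSet_Ioc
      simp [twoPowers, ht.2]
    · have h : IntegrableOn (fun t : ℝ => L * t ^ b) (Set.Ioi 1) :=
        (integrableOn_Ioi_rpow_of_lt hb one_pos).const_mul L
      refine h.congr_fun (fun t ht => ?_) measurableSet_Ioi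
      simp [twoPowers, not_le.2 (Set.mem_Ioi.1 ht)]
  have := (integrable_fun_norm_addHaar (E := ℝ) volume (f := twoPowers K L a b)).2
    (by simpa using key)
  simpa using this

/-- Barrier construction: for `γ ∈ (0,2s)` there is a smooth function `v` with `v(0) = 0`,
`0 ≤ v ≤ |·|^γ`, `v = |·|^γ` outside `B₁`, and `ℐ v` bounded above on `ℝⁿ`. -/
theorem exists_barrier
    (n : ℕ) (hn : 1 ≤ n) (s : ℝ) (hs : s ∈ Set.Ioo (0 : ℝ) 1)
    (μ : Measure (Metric.sphere (0 : EuclideanSpace ℝ (Fin n)) 1)) [IsFiniteMeasure μ]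
    (Λ : ℝ) (hΛ : 0 < Λ) (hμΛ : μ Set.univ ≤ ENNReal.ofReal Λ)
    (γ : ℝ) (hγ : γ ∈ Set.Ioo (0 : ℝ) (2 * s)) :
    ∃ (v : EuclideanSpace ℝ (Fin n) → ℝ) (C : ℝ),
      ContDiff ℝ (⊤ : ℕ∞) v ∧ 0 < C ∧
      v 0 = 0 ∧
      (∀ x, 0 ≤ v x ∧ v x ≤ ‖x‖ ^ γ) ∧
      (∀ x : EuclideanSpace ℝ (Fin n), 1 ≤ ‖x‖ → v x = ‖x‖ ^ γ) ∧
      (∀ x, opI n s μ v x ≤ C) := by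
  obtain ⟨hs0, hs1⟩ := hs
  obtain ⟨hγ0, hγs⟩ := hγ
  obtain ⟨K, hK0, hK⟩ := exists_barrier_second_diff_le_sq
    (E := EuclideanSpace ℝ (Fin n)) hγ0.le (by linarith)
  have hint := (integrable_twoPowers_abs K 4 (a := 1 - 2 * s) (b := γ - (1 + 2 * s))
    (by linarith) (by linarith)).comp_snd μ
  refine ⟨barrier γ, |∫ p, twoPowers K 4 (1 - 2 * s) (γ - (1 + 2 * s)) |p.2| ∂(μ.prod volume)| + 1,
    contDiff_barrier γ, by positivity, barrier_zero γ,
    fun x => ⟨barrier_nonneg γ x, barrier_le γ x⟩, fun x => barrier_eq_of_one_le γ, fun x => ?_⟩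
  rw [opI]
  by_cases hi : Integrable (fun p : Metric.sphere (0 : EuclideanSpace ℝ (Fin n)) 1 × ℝ =>
    (barrier γ (x + p.2 • (p.1 : EuclideanSpace ℝ (Fin n))) +
      barrier γ (x - p.2 • (p.1 : EuclideanSpace ℝ (Fin n))) - 2 * barrier γ x) /
        |p.2| ^ (1 + 2 * s)) (μ.prod volume)
  · refine (integral_mono hi hint ?_).trans ((le_abs_self _).trans (by linarith))
    rintro ⟨θ, r⟩
    have hnorm : ‖r • (θ : EuclideanSpace ℝ (Fin n))‖ = |r| := by
      simp [norm_smul]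
    dsimp only
    rcases eq_or_ne r 0 with rfl | hr
    · have : |(0 : ℝ)| ^ (1 + 2 * s) = 0 := by
        rw [abs_zero, Real.zero_rpow (by linarith)]
      rw [this, div_zero]
      simp only [twoPowers, abs_zero, zero_le_one, if_true]
      positivity
    have hr0 : 0 < |r| := abs_pos.2 hr
    rw [div_le_iff₀ (Real.rpow_pos_of_pos hr0 _), twoPowers]
    split_ifs with hr1
    · rw [mul_assoc, ← Real.rpow_add hr0]
      have h2 : 1 - 2 * s + (1 + 2 * s) = (2 : ℕ) := by push_cast; ring
      rw [h2, Real.rpow_natCast, ← hnorm]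
      exact hK x _ (hnorm.trans_le hr1)
    · rw [mul_assoc, ← Real.rpow_add hr0, sub_add_cancel]
      have h := barrier_second_diff_le_rpow hγ0.le (by linarith) x
        (r • (θ : EuclideanSpace ℝ (Fin n)))
      rw [hnorm] at h
      linarith [Real.one_le_rpow (not_le.1 hr1).le hγ0.le]
  · rw [integral_undef hi]
    positivity
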